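/- The omega-limit set of a collision trajectory is a singleton: if (m₁,m₂,m₃,ξ,p) is a collision solution of the reduced two-body system on [t₀, t*) with t* < ∞ and ξ(t) → +∞ as t → t*⁻, and c is the conserved Casimir value, then there exist real numbers m₁*, m₂* with (m₁*)² + (m₂*)² = c such that m₁(t) → m₁*, m₂(t) → m₂*, and m₃(t) → 0 as t → t*⁻. -/

import Mathlib

open Filter Set

/-!
Let `w = p - m₁ / 2` (half the radial velocity) and `v = m₃ ξ - m₂ / 2` (its transverse
counterpart). Conservation of energy and of the Casimir gives `w² + v² = ξ + O(1)`, so that `w` and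
`v` are `O(√ξ)`; in particular `m₃ → 0`.

The equations of motion give `(w / ξ)' = ξ + O(1)`, a Lagrange-Jacobi identity. As `w / ξ → 0`,
this shows that `ξ` is integrable up to the collision time and that `w ≤ 0`, i.e. that `ξ`
eventually increases. The quantity `v / ξ` is almost conserved: it tends to zero and has derivative
`O(1 / ξ)`. Since `1 / ξ` decreases, integrating up to the collision time `b` yields
`v / ξ = O((b - t) / ξ)`, hence `v` is bounded. Finally, in terms of `v`,
`m₁' = ξ (2 m₂ v + m₃²)` and `m₂' = -2 m₁ ξ v - m₃ p`, both of which are `O(ξ)`, so `m₁` and `m₂`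
converge.
-/

open Asymptotics
open scoped Topology

section Comparison

variable {E : Type*} [NormedAddCommGroup E] [NormedSpace ℝ E]

theorem eq_of_hasDerivAt_zero {f : ℝ → E} {s : Set ℝ} (hs : Convex ℝ s)
    (hf : ∀ x ∈ s, HasDerivAt f 0 x) {x y : ℝ} (hx : x ∈ s) (hy : y ∈ s) : f x = f y := by
  have h := hs.norm_image_sub_le_of_norm_hasDerivWithin_le
    (fun z hz => (hf z hz).hasDerivWithinAt) (fun z _ => norm_zero.le) hy hx
  simpa [sub_eq_zero] using h

theorem norm_sub_le_sub_of_norm_hasDerivAt_le {f f' : ℝ → E} {g g' : ℝ → ℝ} {x y : ℝ} (hxy : x ≤ y)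
    (hf : ∀ z ∈ Icc x y, HasDerivAt f (f' z) z) (hg : ∀ z ∈ Icc x y, HasDerivAt g (g' z) z)
    (hfg : ∀ z ∈ Icc x y, ‖f' z‖ ≤ g' z) : ‖f y - f x‖ ≤ g y - g x :=
  image_norm_le_of_norm_deriv_right_le_deriv_boundary'
    (f := fun z => f z - f x) (B := fun z => g z - g x)
    (fun z hz => ((hf z hz).sub_const _).continuousAt.continuousWithinAt)
    (fun z hz => ((hf z (Ico_subset_Icc_self hz)).sub_const _).hasDerivWithinAt)
    (by simp)
    (fun z hz => ((hg z hz).sub_const _).continuousAt.continuousWithinAt)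
    (fun z hz => ((hg z (Ico_subset_Icc_self hz)).sub_const _).hasDerivWithinAt)
    (fun z hz => hfg z (Ico_subset_Icc_self hz)) (right_mem_Icc.2 hxy)

variable {f f' : ℝ → E} {g g' : ℝ → ℝ} {b : ℝ}

theorem eventually_le_of_tendsto_of_hasDerivAt_nonneg {M : ℝ}
    (hg : ∀ᶠ x in 𝓝[<] b, HasDerivAt g (g' x) x) (hg' : ∀ᶠ x in 𝓝[<] b, 0 ≤ g' x)
    (hgM : Tendsto g (𝓝[<] b) (𝓝 M)) : ∀ᶠ x in 𝓝[<] b, g x ≤ M := by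
  obtain ⟨a, hab, ha⟩ := mem_nhdsLT_iff_exists_Ioo_subset.1 (hg.and hg')
  filter_upwards [Ioo_mem_nhdsLT hab] with x hx
  refine ge_of_tendsto hgM ?_
  filter_upwards [Ioo_mem_nhdsLT hx.2] with y hy
  have hsub : Icc x y ⊆ Ioo a b := Icc_subset_Ioo hx.1 hy.2
  have hle := norm_sub_le_sub_of_norm_hasDerivAt_le hy.1.le (fun z hz => (ha (hsub hz)).1)
    (fun z hz => (ha (hsub hz)).1) fun z hz => (Real.norm_of_nonneg (ha (hsub hz)).2).le
  exact sub_nonneg.1 ((norm_nonneg _).trans hle)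

theorem exists_norm_sub_le_mul_sub_of_hasDerivAt_isBigO
    (hf : ∀ᶠ x in 𝓝[<] b, HasDerivAt f (f' x) x) (hg : ∀ᶠ x in 𝓝[<] b, HasDerivAt g (g' x) x)
    (hg' : ∀ᶠ x in 𝓝[<] b, 0 ≤ g' x) (hfg : f' =O[𝓝[<] b] g') :
    ∃ C, ∃ a < b, ∀ x ∈ Ioo a b, ∀ y ∈ Ioo a b, x ≤ y → ‖f y - f x‖ ≤ C * (g y - g x) := by
  obtain ⟨C, hC⟩ := hfg.bound
  obtain ⟨a, hab, ha⟩ := mem_nhdsLT_iff_exists_Ioo_subset.1 (hf.and (hg.and (hg'.and hC)))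
  refine ⟨C, a, hab, fun x hx y hy hxy => ?_⟩
  have hsub : Icc x y ⊆ Ioo a b := Icc_subset_Ioo hx.1 hy.2
  have hle : ∀ z ∈ Icc x y, ‖f' z‖ ≤ C * g' z := by
    intro z hz
    obtain ⟨-, -, hnonneg, hbound⟩ := ha (hsub hz)
    rwa [Real.norm_of_nonneg hnonneg] at hbound
  rw [mul_sub]
  exact norm_sub_le_sub_of_norm_hasDerivAt_le hxy (fun z hz => (ha (hsub hz)).1)
    (fun z hz => (ha (hsub hz)).2.1.const_mul C) hle

theorem isBigO_sub_of_hasDerivAt_isBigO {L : E} {M : ℝ}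
    (hf : ∀ᶠ x in 𝓝[<] b, HasDerivAt f (f' x) x) (hg : ∀ᶠ x in 𝓝[<] b, HasDerivAt g (g' x) x)
    (hg' : ∀ᶠ x in 𝓝[<] b, 0 ≤ g' x) (hfg : f' =O[𝓝[<] b] g')
    (hfL : Tendsto f (𝓝[<] b) (𝓝 L)) (hgM : Tendsto g (𝓝[<] b) (𝓝 M)) :
    (fun x => L - f x) =O[𝓝[<] b] fun x => M - g x := by
  obtain ⟨C, a, hab, hC⟩ := exists_norm_sub_le_mul_sub_of_hasDerivAt_isBigO hf hg hg' hfg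
  refine .of_bound |C| ?_
  filter_upwards [Ioo_mem_nhdsLT hab] with x hx
  calc ‖L - f x‖ ≤ C * (M - g x) := by
        refine le_of_tendsto_of_tendsto (hfL.sub_const _).norm ((hgM.sub_const _).const_mul C) ?_
        filter_upwards [Ioo_mem_nhdsLT hx.2] with y hy
        exact hC x hx y ⟨hx.1.trans hy.1, hy.2⟩ hy.1.le
    _ ≤ |C| * ‖M - g x‖ := by rw [Real.norm_eq_abs, ← abs_mul]; exact le_abs_self _

theorem exists_tendsto_of_hasDerivAt_isBigO [CompleteSpace E] {M : ℝ}
    (hf : ∀ᶠ x in 𝓝[<] b, HasDerivAt f (f' x) x) (hg : ∀ᶠ x in 𝓝[<] b, HasDerivAt g (g' x) x)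
    (hg' : ∀ᶠ x in 𝓝[<] b, 0 ≤ g' x) (hfg : f' =O[𝓝[<] b] g')
    (hgM : Tendsto g (𝓝[<] b) (𝓝 M)) : ∃ L, Tendsto f (𝓝[<] b) (𝓝 L) := by
  obtain ⟨C, a, hab, hC⟩ := exists_norm_sub_le_mul_sub_of_hasDerivAt_isBigO hf hg hg' hfg
  have hdist : ∀ x ∈ Ioo a b, ∀ y ∈ Ioo a b, dist (f x) (f y) ≤ |C| * dist (g x) (g y) := by
    intro x hx y hy
    wlog hxy : x ≤ y generalizing x y
    · rw [dist_comm, dist_comm (g x)]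
      exact this y hy x hx (le_of_not_ge hxy)
    rw [dist_comm, dist_eq_norm, dist_comm, Real.dist_eq, ← abs_mul]
    exact (hC x hx y hy hxy).trans (le_abs_self _)
  have hg_cauchy : Tendsto (fun q : ℝ × ℝ => |C| * dist (g q.1) (g q.2))
      (𝓝[<] b ×ˢ 𝓝[<] b) (𝓝 0) := by
    simpa using (tendsto_uniformity_iff_dist_tendsto_zero.1
      (cauchy_map_iff'.1 hgM.cauchy_map)).const_mul |C|
  rw [← cauchy_map_iff_exists_tendsto, cauchy_map_iff', tendsto_uniformity_iff_dist_tendsto_zero]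
  refine squeeze_zero' (.of_forall fun _ => dist_nonneg) ?_ hg_cauchy
  filter_upwards [prod_mem_prod (Ioo_mem_nhdsLT hab) (Ioo_mem_nhdsLT hab)] with q hq
  exact hdist _ hq.1 _ hq.2

end Comparison

theorem isLittleO_one_sqrt_atTop : (fun _ => (1 : ℝ)) =o[atTop] Real.sqrt :=
  (isLittleO_const_left_of_ne one_ne_zero).2 (tendsto_norm_atTop_atTop.comp Real.tendsto_sqrt_atTop)

theorem isLittleO_sqrt_id_atTop : Real.sqrt =o[atTop] (id : ℝ → ℝ) := by
  refine (isLittleO_one_sqrt_atTop.mul_isBigO (isBigO_refl Real.sqrt atTop)).congr' ?_ ?_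
  · exact .of_forall fun x => one_mul _
  · filter_upwards [eventually_ge_atTop 0] with x hx
    exact Real.mul_self_sqrt hx

/-- A curve in the phase space `ℝ⁵` of the reduced two-body system on the sphere, in the
coordinates `(m₁, m₂, m₃, ξ, p)` with `ξ = cot q`. -/
structure ReducedCurve where
  m1 : ℝ → ℝ
  m2 : ℝ → ℝ
  m3 : ℝ → ℝ
  xi : ℝ → ℝ
  p : ℝ → ℝ

namespace ReducedCurve

/-- The Casimir function `m₁² + m₂² + m₃²` along a curve. -/
def casimir (γ : ReducedCurve) (t : ℝ) : ℝ :=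
  γ.m1 t ^ 2 + γ.m2 t ^ 2 + γ.m3 t ^ 2

/-- The Hamiltonian of the reduced system, up to a function of the Casimir, along a curve. -/
def energy (γ : ReducedCurve) (t : ℝ) : ℝ :=
  γ.p t ^ 2 - γ.m1 t * γ.p t + (γ.m3 t * γ.xi t) ^ 2 - γ.m2 t * (γ.m3 t * γ.xi t) - γ.xi t

/-- Half the radial velocity, `q' / 2`, where `q = arccot ξ` is the distance of the two bodies. -/
noncomputable def radial (γ : ReducedCurve) (t : ℝ) : ℝ :=
  γ.p t - γ.m1 t / 2

/-- The transverse counterpart of `radial`: the kinetic energy is, up to bounded terms,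
`radial ^ 2 + transverse ^ 2`, and `transverse / ξ` plays the role of the relative angular
momentum. -/
noncomputable def transverse (γ : ReducedCurve) (t : ℝ) : ℝ :=
  γ.m3 t * γ.xi t - γ.m2 t / 2

/-- `γ` satisfies the equations of motion of the reduced two-body system at every time in `s`. -/
structure IsSolutionOn (γ : ReducedCurve) (s : Set ℝ) : Prop where
  hasDerivAt_m1 : ∀ t ∈ s, HasDerivAt γ.m1
    (γ.xi t * (-(γ.m2 t) ^ 2 + (γ.m3 t) ^ 2 + 2 * γ.m2 t * γ.m3 t * γ.xi t)) t
  hasDerivAt_m2 : ∀ t ∈ s, HasDerivAt γ.m2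
    (γ.m1 t * γ.m2 t * γ.xi t - γ.m3 t * γ.p t - 2 * γ.m1 t * γ.m3 t * (γ.xi t) ^ 2) t
  hasDerivAt_m3 : ∀ t ∈ s, HasDerivAt γ.m3 (γ.m2 t * γ.p t - γ.m1 t * γ.m3 t * γ.xi t) t
  hasDerivAt_xi : ∀ t ∈ s, HasDerivAt γ.xi (-((γ.xi t) ^ 2 + 1) * (2 * γ.p t - γ.m1 t)) t
  hasDerivAt_p : ∀ t ∈ s, HasDerivAt γ.p
    (-((γ.xi t) ^ 2 + 1) * (1 + γ.m2 t * γ.m3 t - 2 * (γ.m3 t) ^ 2 * γ.xi t)) t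

/-- `γ` is a solution on `[a, b)` along which the two bodies collide at time `b`. -/
structure IsCollision (γ : ReducedCurve) (a b : ℝ) : Prop extends γ.IsSolutionOn (Ico a b) where
  lt : a < b
  tendsto_xi : Tendsto γ.xi (𝓝[<] b) atTop

variable {γ : ReducedCurve}

theorem radial_sq_add_transverse_sq (γ : ReducedCurve) (t : ℝ) :
    γ.radial t ^ 2 + γ.transverse t ^ 2 =
      γ.xi t + γ.energy t + (γ.m1 t ^ 2 + γ.m2 t ^ 2) / 4 := by
  simp only [radial, transverse, energy]
  ring

namespace IsSolutionOn

variable {s : Set ℝ} {t : ℝ}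

theorem hasDerivAt_m1_transverse (hγ : γ.IsSolutionOn s) (ht : t ∈ s) : HasDerivAt γ.m1
    (γ.xi t * (2 * γ.m2 t * γ.transverse t + γ.m3 t ^ 2)) t := by
  convert hγ.hasDerivAt_m1 t ht using 1
  simp only [transverse]
  ring

theorem hasDerivAt_m2_transverse (hγ : γ.IsSolutionOn s) (ht : t ∈ s) : HasDerivAt γ.m2
    (-(γ.xi t * (2 * γ.m1 t * γ.transverse t)) - γ.m3 t * γ.p t) t := by
  convert hγ.hasDerivAt_m2 t ht using 1
  simp only [transverse]
  ring

theorem hasDerivAt_casimir (hγ : γ.IsSolutionOn s) (ht : t ∈ s) : HasDerivAt γ.casimir 0 t := by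
  convert! (((hγ.hasDerivAt_m1 t ht).pow 2).add ((hγ.hasDerivAt_m2 t ht).pow 2)).add
    ((hγ.hasDerivAt_m3 t ht).pow 2) using 1
  push_cast
  ring

theorem hasDerivAt_energy (hγ : γ.IsSolutionOn s) (ht : t ∈ s) : HasDerivAt γ.energy 0 t := by
  have hp := hγ.hasDerivAt_p t ht
  have hxi := hγ.hasDerivAt_xi t ht
  have hu := (hγ.hasDerivAt_m3 t ht).mul hxi
  convert! ((((hp.pow 2).sub ((hγ.hasDerivAt_m1 t ht).mul hp)).add (hu.pow 2)).sub
    ((hγ.hasDerivAt_m2 t ht).mul hu)).sub hxi using 1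
  simp only [Pi.mul_apply]
  push_cast
  ring

theorem hasDerivAt_radial_div_xi (hγ : γ.IsSolutionOn s) (ht : t ∈ s) (hxi : γ.xi t ≠ 0) :
    HasDerivAt (fun r => γ.radial r / γ.xi r)
      (γ.xi t + 2 * γ.energy t + (γ.m1 t ^ 2 + γ.m2 t ^ 2 - γ.m3 t ^ 2) / 2
        + (γ.xi t + 2 * γ.energy t + (γ.m1 t ^ 2 + γ.m2 t ^ 2) / 2
          + γ.m2 t * γ.transverse t) / γ.xi t ^ 2) t := by
  convert! ((hγ.hasDerivAt_p t ht).sub ((hγ.hasDerivAt_m1 t ht).div_const 2)).div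
    (hγ.hasDerivAt_xi t ht) hxi using 1
  simp only [transverse, energy, Pi.sub_apply]
  field_simp
  ring

theorem hasDerivAt_transverse_div_xi (hγ : γ.IsSolutionOn s) (ht : t ∈ s) (hxi : γ.xi t ≠ 0) :
    HasDerivAt (fun r => γ.transverse r / γ.xi r)
      ((2 * γ.radial t * γ.transverse t
        - γ.m3 t * γ.xi t * (3 / 2 * γ.p t - γ.m1 t)) / γ.xi t ^ 2) t := by
  convert! (((hγ.hasDerivAt_m3 t ht).mul (hγ.hasDerivAt_xi t ht)).sub
    ((hγ.hasDerivAt_m2 t ht).div_const 2)).div (hγ.hasDerivAt_xi t ht) hxi using 1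
  simp only [transverse, radial, Pi.sub_apply, Pi.mul_apply]
  field_simp
  ring

end IsSolutionOn

namespace IsCollision

variable {a b : ℝ} {f : ℝ → ℝ}

theorem eventually_mem (hγ : γ.IsCollision a b) : ∀ᶠ t in 𝓝[<] b, t ∈ Ico a b :=
  Ico_mem_nhdsLT hγ.lt

theorem eventually_casimir_eq (hγ : γ.IsCollision a b) :
    ∀ᶠ t in 𝓝[<] b, γ.casimir t = γ.casimir a := by
  filter_upwards [hγ.eventually_mem] with t ht
  exact eq_of_hasDerivAt_zero (convex_Ico a b) (fun _ => hγ.hasDerivAt_casimir) ht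
    (left_mem_Ico.2 hγ.lt)

theorem eventually_energy_eq (hγ : γ.IsCollision a b) :
    ∀ᶠ t in 𝓝[<] b, γ.energy t = γ.energy a := by
  filter_upwards [hγ.eventually_mem] with t ht
  exact eq_of_hasDerivAt_zero (convex_Ico a b) (fun _ => hγ.hasDerivAt_energy) ht
    (left_mem_Ico.2 hγ.lt)

theorem isBigO_one_of_sq_le_casimir (hγ : γ.IsCollision a b) (hf : ∀ t, f t ^ 2 ≤ γ.casimir t) :
    f =O[𝓝[<] b] fun _ => (1 : ℝ) := by
  refine .of_bound √(γ.casimir a) ?_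
  filter_upwards [hγ.eventually_casimir_eq] with t ht
  simpa [ht] using Real.abs_le_sqrt (hf t)

theorem isBigO_m1_one (hγ : γ.IsCollision a b) : γ.m1 =O[𝓝[<] b] fun _ => (1 : ℝ) :=
  hγ.isBigO_one_of_sq_le_casimir fun t => by simp only [casimir]; nlinarith

theorem isBigO_m2_one (hγ : γ.IsCollision a b) : γ.m2 =O[𝓝[<] b] fun _ => (1 : ℝ) :=
  hγ.isBigO_one_of_sq_le_casimir fun t => by simp only [casimir]; nlinarith

theorem eventually_radial_sq_add_transverse_sq_le (hγ : γ.IsCollision a b) :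
    ∀ᶠ t in 𝓝[<] b, γ.radial t ^ 2 + γ.transverse t ^ 2 ≤ 2 * γ.xi t := by
  filter_upwards [hγ.eventually_casimir_eq, hγ.eventually_energy_eq,
    hγ.tendsto_xi.eventually_ge_atTop (γ.energy a + γ.casimir a / 4)] with t hC hE hxi
  rw [radial_sq_add_transverse_sq, hE]
  rw [← hC, casimir] at hxi
  nlinarith

theorem isBigO_sqrt_xi_of_sq_le (hγ : γ.IsCollision a b)
    (hf : ∀ t, f t ^ 2 ≤ γ.radial t ^ 2 + γ.transverse t ^ 2) :
    f =O[𝓝[<] b] fun t => √(γ.xi t) := by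
  refine .of_bound √2 ?_
  filter_upwards [hγ.eventually_radial_sq_add_transverse_sq_le] with t ht
  rw [Real.norm_eq_abs, Real.norm_of_nonneg (Real.sqrt_nonneg _), ← Real.sqrt_mul zero_le_two]
  exact Real.abs_le_sqrt ((hf t).trans ht)

theorem isBigO_radial_sqrt_xi (hγ : γ.IsCollision a b) : γ.radial =O[𝓝[<] b] fun t => √(γ.xi t) :=
  hγ.isBigO_sqrt_xi_of_sq_le fun _ => le_add_of_nonneg_right (sq_nonneg _)

theorem isBigO_transverse_sqrt_xi (hγ : γ.IsCollision a b) :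
    γ.transverse =O[𝓝[<] b] fun t => √(γ.xi t) :=
  hγ.isBigO_sqrt_xi_of_sq_le fun _ => le_add_of_nonneg_left (sq_nonneg _)

theorem isBigO_one_sqrt_xi (hγ : γ.IsCollision a b) :
    (fun _ => (1 : ℝ)) =O[𝓝[<] b] fun t => √(γ.xi t) :=
  (isLittleO_one_sqrt_atTop.comp_tendsto hγ.tendsto_xi).isBigO

theorem isBigO_p_sqrt_xi (hγ : γ.IsCollision a b) : γ.p =O[𝓝[<] b] fun t => √(γ.xi t) := by
  have h := hγ.isBigO_radial_sqrt_xi.add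
    ((hγ.isBigO_m1_one.const_mul_left 2⁻¹).trans hγ.isBigO_one_sqrt_xi)
  refine h.congr_left fun t => ?_
  simp only [radial]
  ring

theorem isBigO_m3_mul_xi_sqrt_xi (hγ : γ.IsCollision a b) :
    (fun t => γ.m3 t * γ.xi t) =O[𝓝[<] b] fun t => √(γ.xi t) := by
  have h := hγ.isBigO_transverse_sqrt_xi.add
    ((hγ.isBigO_m2_one.const_mul_left 2⁻¹).trans hγ.isBigO_one_sqrt_xi)
  refine h.congr_left fun t => ?_
  simp only [transverse]
  ring

theorem tendsto_div_xi_of_isBigO_sqrt (hγ : γ.IsCollision a b)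
    (hf : f =O[𝓝[<] b] fun t => √(γ.xi t)) :
    Tendsto (fun t => f t / γ.xi t) (𝓝[<] b) (𝓝 0) :=
  (hf.trans_isLittleO
    (isLittleO_sqrt_id_atTop.comp_tendsto hγ.tendsto_xi)).tendsto_div_nhds_zero

theorem tendsto_m3 (hγ : γ.IsCollision a b) : Tendsto γ.m3 (𝓝[<] b) (𝓝 0) := by
  refine (hγ.tendsto_div_xi_of_isBigO_sqrt hγ.isBigO_m3_mul_xi_sqrt_xi).congr' ?_
  filter_upwards [hγ.tendsto_xi.eventually_ne_atTop 0] with t hxi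
  exact mul_div_cancel_right₀ _ hxi

theorem eventually_hasDerivAt_radial_div_xi (hγ : γ.IsCollision a b) :
    ∀ᶠ t in 𝓝[<] b, HasDerivAt (fun r => γ.radial r / γ.xi r)
      (deriv (fun r => γ.radial r / γ.xi r) t) t := by
  filter_upwards [hγ.eventually_mem, hγ.tendsto_xi.eventually_ne_atTop 0] with t ht hxi
  exact (hγ.hasDerivAt_radial_div_xi ht hxi).differentiableAt.hasDerivAt

theorem eventually_half_xi_le_deriv_radial_div_xi (hγ : γ.IsCollision a b) :
    ∀ᶠ t in 𝓝[<] b, γ.xi t / 2 ≤ deriv (fun r => γ.radial r / γ.xi r) t := by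
  filter_upwards [hγ.eventually_mem, hγ.eventually_casimir_eq, hγ.eventually_energy_eq,
    hγ.eventually_radial_sq_add_transverse_sq_le, hγ.tendsto_xi.eventually_gt_atTop 0,
    hγ.tendsto_xi.eventually_ge_atTop (2 * γ.casimir a - 4 * γ.energy a)]
    with t ht hC hE hsq hpos hxi
  rw [(hγ.hasDerivAt_radial_div_xi ht hpos.ne').deriv, hE]
  rw [← hC, casimir] at hxi
  have hmain : γ.xi t / 2 ≤
      γ.xi t + 2 * γ.energy a + (γ.m1 t ^ 2 + γ.m2 t ^ 2 - γ.m3 t ^ 2) / 2 := by nlinarith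
  have hrest : 0 ≤ γ.xi t + 2 * γ.energy a + (γ.m1 t ^ 2 + γ.m2 t ^ 2) / 2
      + γ.m2 t * γ.transverse t := by
    nlinarith [sq_nonneg (γ.transverse t + 2 * γ.m2 t)]
  exact hmain.trans (le_add_of_nonneg_right (div_nonneg hrest (sq_nonneg _)))

theorem eventually_deriv_radial_div_xi_nonneg (hγ : γ.IsCollision a b) :
    ∀ᶠ t in 𝓝[<] b, 0 ≤ deriv (fun r => γ.radial r / γ.xi r) t := by
  filter_upwards [hγ.eventually_half_xi_le_deriv_radial_div_xi,
    hγ.tendsto_xi.eventually_ge_atTop 0] with t hle hxi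
  linarith

theorem eventually_radial_nonpos (hγ : γ.IsCollision a b) :
    ∀ᶠ t in 𝓝[<] b, γ.radial t ≤ 0 := by
  have hdiv : ∀ᶠ t in 𝓝[<] b, γ.radial t / γ.xi t ≤ 0 :=
    eventually_le_of_tendsto_of_hasDerivAt_nonneg hγ.eventually_hasDerivAt_radial_div_xi
      hγ.eventually_deriv_radial_div_xi_nonneg
      (hγ.tendsto_div_xi_of_isBigO_sqrt hγ.isBigO_radial_sqrt_xi)
  filter_upwards [hdiv, hγ.tendsto_xi.eventually_gt_atTop 0] with t hle hxi
  simpa using (div_le_iff₀ hxi).1 hle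

theorem eventually_hasDerivAt_sub_div_xi (hγ : γ.IsCollision a b) :
    ∀ᶠ t in 𝓝[<] b, HasDerivAt (fun r => (r - b) / γ.xi r)
      (deriv (fun r => (r - b) / γ.xi r) t) t := by
  filter_upwards [hγ.eventually_mem, hγ.tendsto_xi.eventually_ne_atTop 0] with t ht hxi
  exact (((hasDerivAt_id t).sub_const b).div
    (hγ.hasDerivAt_xi t ht) hxi).differentiableAt.hasDerivAt

theorem eventually_inv_xi_le_deriv_sub_div_xi (hγ : γ.IsCollision a b) :
    ∀ᶠ t in 𝓝[<] b, (γ.xi t)⁻¹ ≤ deriv (fun r => (r - b) / γ.xi r) t := by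
  filter_upwards [hγ.eventually_mem, hγ.tendsto_xi.eventually_gt_atTop 0,
    hγ.eventually_radial_nonpos] with t ht hxi hradial
  have hderiv := ((hasDerivAt_id t).sub_const b).div (hγ.hasDerivAt_xi t ht) hxi.ne'
  have hxi_mono : 0 ≤ -((γ.xi t) ^ 2 + 1) * (2 * γ.p t - γ.m1 t) := by
    refine mul_nonneg_of_nonpos_of_nonpos (by nlinarith) ?_
    simp only [radial] at hradial
    linarith
  have hbt : 0 ≤ b - t := sub_nonneg.2 ht.2.le
  calc (γ.xi t)⁻¹ ≤ (γ.xi t)⁻¹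
        + (b - t) * (-((γ.xi t) ^ 2 + 1) * (2 * γ.p t - γ.m1 t)) / γ.xi t ^ 2 :=
        le_add_of_nonneg_right (by positivity)
    _ = deriv (fun r => (r - b) / γ.xi r) t := by
        refine Eq.trans ?_ hderiv.deriv.symm
        simp only [id]
        field_simp
        ring

theorem eventually_deriv_sub_div_xi_nonneg (hγ : γ.IsCollision a b) :
    ∀ᶠ t in 𝓝[<] b, 0 ≤ deriv (fun r => (r - b) / γ.xi r) t := by
  filter_upwards [hγ.eventually_inv_xi_le_deriv_sub_div_xi,
    hγ.tendsto_xi.eventually_ge_atTop 0] with t hle hxi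
  exact (inv_nonneg.2 hxi).trans hle

theorem tendsto_sub_div_xi (hγ : γ.IsCollision a b) :
    Tendsto (fun t => (t - b) / γ.xi t) (𝓝[<] b) (𝓝 0) := by
  have hsub : Tendsto (fun t => t - b) (𝓝[<] b) (𝓝 0) := by
    simpa using ((continuous_sub_right b).tendsto b).mono_left nhdsWithin_le_nhds
  exact hsub.div_atTop hγ.tendsto_xi

theorem eventually_hasDerivAt_transverse_div_xi (hγ : γ.IsCollision a b) :
    ∀ᶠ t in 𝓝[<] b, HasDerivAt (fun r => γ.transverse r / γ.xi r)
      ((2 * γ.radial t * γ.transverse t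
        - γ.m3 t * γ.xi t * (3 / 2 * γ.p t - γ.m1 t)) / γ.xi t ^ 2) t := by
  filter_upwards [hγ.eventually_mem, hγ.tendsto_xi.eventually_ne_atTop 0] with t ht hxi
  exact hγ.hasDerivAt_transverse_div_xi ht hxi

theorem isBigO_deriv_transverse_div_xi (hγ : γ.IsCollision a b) :
    (fun t => (2 * γ.radial t * γ.transverse t
      - γ.m3 t * γ.xi t * (3 / 2 * γ.p t - γ.m1 t)) / γ.xi t ^ 2)
      =O[𝓝[<] b] fun t => (γ.xi t)⁻¹ := by
  have hvel : (fun t => 3 / 2 * γ.p t - γ.m1 t) =O[𝓝[<] b] fun t => √(γ.xi t) :=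
    (hγ.isBigO_p_sqrt_xi.const_mul_left _).sub (hγ.isBigO_m1_one.trans hγ.isBigO_one_sqrt_xi)
  have hnum := ((hγ.isBigO_radial_sqrt_xi.const_mul_left 2).mul hγ.isBigO_transverse_sqrt_xi).sub
    (hγ.isBigO_m3_mul_xi_sqrt_xi.mul hvel)
  refine (hnum.mul (isBigO_refl (fun t => (γ.xi t ^ 2)⁻¹) _)).congr' ?_ ?_
  · exact .of_forall fun t => (div_eq_mul_inv _ _).symm
  · filter_upwards [hγ.tendsto_xi.eventually_gt_atTop 0] with t hxi
    rw [Real.mul_self_sqrt hxi.le]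
    field_simp

theorem isBigO_transverse_sub (hγ : γ.IsCollision a b) :
    γ.transverse =O[𝓝[<] b] fun t => t - b := by
  have hinv : (fun t => (γ.xi t)⁻¹) =O[𝓝[<] b] deriv fun r => (r - b) / γ.xi r := by
    refine .of_bound' ?_
    filter_upwards [hγ.eventually_inv_xi_le_deriv_sub_div_xi,
      hγ.tendsto_xi.eventually_ge_atTop 0] with t hle hxi
    rw [Real.norm_of_nonneg (inv_nonneg.2 hxi)]
    exact hle.trans (le_abs_self _)
  have hdiv := isBigO_sub_of_hasDerivAt_isBigO hγ.eventually_hasDerivAt_transverse_div_xi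
    hγ.eventually_hasDerivAt_sub_div_xi hγ.eventually_deriv_sub_div_xi_nonneg
    (hγ.isBigO_deriv_transverse_div_xi.trans hinv)
    (hγ.tendsto_div_xi_of_isBigO_sqrt hγ.isBigO_transverse_sqrt_xi) hγ.tendsto_sub_div_xi
  simp only [zero_sub, isBigO_neg_left, isBigO_neg_right] at hdiv
  refine (hdiv.mul (isBigO_refl γ.xi _)).congr' ?_ ?_ <;>
  · filter_upwards [hγ.tendsto_xi.eventually_ne_atTop 0] with t hxi
    exact div_mul_cancel₀ _ hxi

theorem isBigO_transverse_one (hγ : γ.IsCollision a b) :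
    γ.transverse =O[𝓝[<] b] fun _ => (1 : ℝ) := by
  refine hγ.isBigO_transverse_sub.trans ?_
  exact (((continuous_sub_right b).tendsto b).mono_left nhdsWithin_le_nhds).isBigO_one ℝ

theorem isBigO_deriv_m1 (hγ : γ.IsCollision a b) :
    (fun t => γ.xi t * (2 * γ.m2 t * γ.transverse t + γ.m3 t ^ 2)) =O[𝓝[<] b] γ.xi := by
  have hm3 := (hγ.tendsto_m3.pow 2).isBigO_one ℝ
  have hfactor := ((hγ.isBigO_m2_one.const_mul_left 2).mul hγ.isBigO_transverse_one).add
    (hm3.congr_right fun _ => (one_mul (1 : ℝ)).symm)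
  simpa using (isBigO_refl γ.xi (𝓝[<] b)).mul hfactor

theorem isBigO_deriv_m2 (hγ : γ.IsCollision a b) :
    (fun t => -(γ.xi t * (2 * γ.m1 t * γ.transverse t)) - γ.m3 t * γ.p t) =O[𝓝[<] b] γ.xi := by
  have htransverse : (fun t => γ.xi t * (2 * γ.m1 t * γ.transverse t)) =O[𝓝[<] b] γ.xi := by
    simpa using (isBigO_refl γ.xi (𝓝[<] b)).mul
      ((hγ.isBigO_m1_one.const_mul_left 2).mul hγ.isBigO_transverse_one)
  have hm3p : (fun t => γ.m3 t * γ.p t) =O[𝓝[<] b] fun t => √(γ.xi t) := by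
    simpa using (hγ.tendsto_m3.isBigO_one ℝ).mul hγ.isBigO_p_sqrt_xi
  exact htransverse.neg_left.sub
    (hm3p.trans (isLittleO_sqrt_id_atTop.comp_tendsto hγ.tendsto_xi).isBigO)

theorem exists_tendsto_of_hasDerivAt_isBigO_xi (hγ : γ.IsCollision a b) {f' : ℝ → ℝ}
    (hf : ∀ t ∈ Ico a b, HasDerivAt f (f' t) t) (hf' : f' =O[𝓝[<] b] γ.xi) :
    ∃ L, Tendsto f (𝓝[<] b) (𝓝 L) := by
  have hxi : γ.xi =O[𝓝[<] b] deriv fun r => γ.radial r / γ.xi r := by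
    refine .of_bound 2 ?_
    filter_upwards [hγ.eventually_half_xi_le_deriv_radial_div_xi,
      hγ.tendsto_xi.eventually_ge_atTop 0] with t hle hpos
    rw [Real.norm_of_nonneg hpos, Real.norm_eq_abs]
    linarith [le_abs_self (deriv (fun r => γ.radial r / γ.xi r) t)]
  exact exists_tendsto_of_hasDerivAt_isBigO (hγ.eventually_mem.mono hf)
    hγ.eventually_hasDerivAt_radial_div_xi hγ.eventually_deriv_radial_div_xi_nonneg
    (hf'.trans hxi) (hγ.tendsto_div_xi_of_isBigO_sqrt hγ.isBigO_radial_sqrt_xi)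

theorem exists_tendsto_m1 (hγ : γ.IsCollision a b) : ∃ L, Tendsto γ.m1 (𝓝[<] b) (𝓝 L) :=
  hγ.exists_tendsto_of_hasDerivAt_isBigO_xi (fun _ => hγ.hasDerivAt_m1_transverse)
    hγ.isBigO_deriv_m1

theorem exists_tendsto_m2 (hγ : γ.IsCollision a b) : ∃ L, Tendsto γ.m2 (𝓝[<] b) (𝓝 L) :=
  hγ.exists_tendsto_of_hasDerivAt_isBigO_xi (fun _ => hγ.hasDerivAt_m2_transverse)
    hγ.isBigO_deriv_m2

end IsCollision

end ReducedCurve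

/-- The omega-limit set of a collision trajectory is a singleton: along a collision
solution with `t* < ∞`, `ξ(t) → +∞` as `t → t*⁻`, and conserved Casimir value `c`,
there are `m₁*, m₂*` with `(m₁*)² + (m₂*)² = c` such that `m₁(t) → m₁*`,
`m₂(t) → m₂*` and `m₃(t) → 0` as `t → t*⁻`. -/
theorem omega_limit_singleton
    (t0 tstar : ℝ) (ht0 : t0 < tstar)
    (m1 m2 m3 xi p : ℝ → ℝ) (c : ℝ)
    (hm1 : ∀ t ∈ Set.Ico t0 tstar,
      HasDerivAt m1 (xi t * (-(m2 t)^2 + (m3 t)^2 + 2 * m2 t * m3 t * xi t)) t)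
    (hm2 : ∀ t ∈ Set.Ico t0 tstar,
      HasDerivAt m2 (m1 t * m2 t * xi t - m3 t * p t - 2 * m1 t * m3 t * (xi t)^2) t)
    (hm3 : ∀ t ∈ Set.Ico t0 tstar,
      HasDerivAt m3 (m2 t * p t - m1 t * m3 t * xi t) t)
    (hxi : ∀ t ∈ Set.Ico t0 tstar,
      HasDerivAt xi (-((xi t)^2 + 1) * (2 * p t - m1 t)) t)
    (hp : ∀ t ∈ Set.Ico t0 tstar,
      HasDerivAt p (-((xi t)^2 + 1) * (1 + m2 t * m3 t - 2 * (m3 t)^2 * xi t)) t)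
    (hC : ∀ t ∈ Set.Ico t0 tstar, (m1 t)^2 + (m2 t)^2 + (m3 t)^2 = c)
    (hcoll : Tendsto xi (nhdsWithin tstar (Set.Iio tstar)) atTop) :
    ∃ m1s m2s : ℝ, m1s^2 + m2s^2 = c ∧
      Tendsto m1 (nhdsWithin tstar (Set.Iio tstar)) (nhds m1s) ∧
      Tendsto m2 (nhdsWithin tstar (Set.Iio tstar)) (nhds m2s) ∧
      Tendsto m3 (nhdsWithin tstar (Set.Iio tstar)) (nhds 0) := by
  have hγ : (ReducedCurve.mk m1 m2 m3 xi p).IsCollision t0 tstar :=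
    ⟨⟨hm1, hm2, hm3, hxi, hp⟩, ht0, hcoll⟩
  obtain ⟨m1s, hm1s⟩ := hγ.exists_tendsto_m1
  obtain ⟨m2s, hm2s⟩ := hγ.exists_tendsto_m2
  have hm3s := hγ.tendsto_m3
  refine ⟨m1s, m2s, ?_, hm1s, hm2s, hm3s⟩
  have hlim : Tendsto (fun t => m1 t ^ 2 + m2 t ^ 2 + m3 t ^ 2) (𝓝[<] tstar)
      (𝓝 (m1s ^ 2 + m2s ^ 2)) := by
    simpa using ((hm1s.pow 2).add (hm2s.pow 2)).add (hm3s.pow 2)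
  exact tendsto_nhds_unique hlim
    (tendsto_const_nhds.congr' (hγ.eventually_mem.mono fun t ht => (hC t ht).symm))
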